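/- Let 𝔤ᶜ be a complex semisimple Lie algebra with Cartan subalgebra 𝔥ᶜ. Two 𝔥ᶜ-regular semisimple subalgebras 𝔞₁ᶜ, 𝔞₂ᶜ of 𝔤ᶜ are conjugate under the adjoint group Gᶜ of 𝔤ᶜ if and only if the root subsets Ψ(𝔥ᶜ,𝔞₁ᶜ) and Ψ(𝔥ᶜ,𝔞₂ᶜ) are conjugate under the Weyl group W(𝔤ᶜ,𝔥ᶜ). -/

import Mathlib

/-!
Suppose `φ` preserves `H` and matches the root spaces in `a₁` with those in `a₂`. A regular
semisimple subalgebra `a` is generated by the root spaces it contains (`le_lieSpan_rootsIn`): if `b`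
is the subalgebra they generate, then `a ⊆ H + b` with `H` abelian and normalizing `b`, so
`a = ⁅a, a⁆ ⊆ b`. Hence `φ` maps `a₁` onto `a₂`.

Conversely, suppose `φ` maps `a₁` onto `a₂`. Then `H` and `φ H` are Cartan subalgebras of `L` that
both lie in the normalizer `N` of `a₂`. If some product `g` of exponentials of ad-nilpotent elements
of `N` carries `φ H` to `H`, then `g` preserves `a₂`, so `g * φ` still maps `a₁` onto `a₂`, and it
also preserves `H`; therefore it permutes the root spaces as required.

To find `g`, write `H` as the Engel subalgebra of a regular element `x`, so that `φ H` is the Engel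
subalgebra of the regular element `φ x`, and both `x` and `φ x` lie in `N`. For a regular `z ∈ N` and
a direction in `N`, the inverse function theorem moves each nearby point of the line through `z` into
`engel z` by exponentials of ad-nilpotent elements of `N` (`eventually_line_mem_orbit_engel`);
when that point is regular, its Engel subalgebra is then conjugate to `engel z`. Conjugacy is thus an
open relation on the regular points of the complex line joining `φ x` to `x`. Only finitely many
points of this line are not regular, so the regular points form a connected set and any two of them
have conjugate Engel subalgebras (`exists_map_engel_eq`).

The same local statement with `N = L` shows that an element with abelian Engel subalgebra is regular,
which gives the regular element `x` above.
-/

/-!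
STATEMENT 9: Let 𝔤ᶜ be a complex semisimple Lie algebra with Cartan subalgebra 𝔥ᶜ.  Two
𝔥ᶜ-regular semisimple subalgebras 𝔞₁ᶜ, 𝔞₂ᶜ of 𝔤ᶜ are conjugate under the adjoint group Gᶜ of
𝔤ᶜ if and only if the root subsets Ψ(𝔥ᶜ,𝔞₁ᶜ) and Ψ(𝔥ᶜ,𝔞₂ᶜ) are conjugate under the Weyl group
W(𝔤ᶜ,𝔥ᶜ).

The Weyl group is realised as N(𝔥ᶜ)/Z(𝔥ᶜ) inside the adjoint group: conjugacy of the two root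
subsets under the Weyl group is expressed by an element of the adjoint group stabilising 𝔥ᶜ and
carrying the root spaces of the first subset onto the root spaces of the second.
-/

variable {L : Type*} [LieRing L] [LieAlgebra ℂ L]

/-- The root space of a linear functional `α` on a Cartan subalgebra `H`. -/
def rootSpaceOf (H : LieSubalgebra ℂ L) (α : Module.Dual ℂ H) : Submodule ℂ L where
  carrier := {x | ∀ h : H, ⁅(h : L), x⁆ = α h • x}
  add_mem' := by intro a b ha hb h; rw [lie_add, ha h, hb h, smul_add]
  zero_mem' := by intro h; simp
  smul_mem' := by intro c a ha h; rw [lie_smul, ha h, smul_comm]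

/-- `α` is a root of `L` relative to the Cartan subalgebra `H`. -/
def IsRootOf (H : LieSubalgebra ℂ L) (α : Module.Dual ℂ H) : Prop :=
  α ≠ 0 ∧ rootSpaceOf H α ≠ ⊥

/-- `Ψ(𝔥ᶜ, 𝔞ᶜ)`: the set of roots whose root spaces lie in `a`. -/
def rootsIn (H : LieSubalgebra ℂ L) (a : LieSubalgebra ℂ L) : Set (Module.Dual ℂ H) :=
  {α | IsRootOf H α ∧ rootSpaceOf H α ≤ a.toSubmodule}

/-- The exponential of a (nilpotent) endomorphism of a finite-dimensional space. -/
noncomputable def expNil [FiniteDimensional ℂ L] (g : Module.End ℂ L) : Module.End ℂ L :=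
  ∑ k ∈ Finset.range (Module.finrank ℂ L + 1), ((k.factorial : ℂ)⁻¹) • g ^ k

/-- The adjoint group of a complex Lie algebra: the group generated by the exponentials
`exp (ad x)` for nilpotent `x`. -/
noncomputable def adjointGroup (L : Type*) [LieRing L] [LieAlgebra ℂ L]
    [FiniteDimensional ℂ L] : Subgroup (L ≃ₗ[ℂ] L) :=
  Subgroup.closure {φ : L ≃ₗ[ℂ] L | ∃ x : L, IsNilpotent (LieAlgebra.ad ℂ L x) ∧
    (φ : L →ₗ[ℂ] L) = expNil (LieAlgebra.ad ℂ L x)}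

/-! ### Products of one-parameter families -/

lemma hasStrictFDerivAt_prod_of_one {R : Type*} [NormedRing R] [NormedAlgebra ℂ R] {n : ℕ}
    (A : Fin n → R) (E : Fin n → ℂ → R)
    (h0 : ∀ i, E i 0 = 1) (hE : ∀ i, HasStrictDerivAt (E i) (A i) 0) :
    HasStrictFDerivAt (fun t : Fin n → ℂ => ((List.finRange n).map fun i => E i (t i)).prod)
      (∑ i, (ContinuousLinearMap.proj (R := ℂ) (φ := fun _ : Fin n => ℂ) i).smulRight (A i)) 0 := by
  have hEi : ∀ i ∈ List.finRange n, HasStrictFDerivAt (fun t : Fin n → ℂ => E i (t i))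
      ((ContinuousLinearMap.proj (R := ℂ) (φ := fun _ : Fin n => ℂ) i).smulRight (A i)) 0 := by
    intro i _
    have h1 : HasStrictFDerivAt (fun t : Fin n → ℂ => t i)
        (ContinuousLinearMap.proj (R := ℂ) (φ := fun _ : Fin n => ℂ) i) 0 :=
      (ContinuousLinearMap.proj (R := ℂ) (φ := fun _ : Fin n => ℂ) i).hasStrictFDerivAt
    have h2 : HasStrictFDerivAt (E i) (ContinuousLinearMap.toSpanSingleton ℂ (A i))
        ((0 : Fin n → ℂ) i) := (hE i).hasStrictFDerivAt
    refine (HasStrictFDerivAt.comp (g := E i) (f := fun t : Fin n → ℂ => t i) 0 h2 h1).congr_fderiv ?_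
    ext; simp
  have hone : ∀ l : List (Fin n), (l.map fun i => E i ((0 : Fin n → ℂ) i)).prod = 1 := by
    intro l
    apply List.prod_eq_one
    simp only [List.mem_map]
    rintro _ ⟨i, _, rfl⟩
    exact h0 i
  refine (HasStrictFDerivAt.list_prod' hEi).congr_fderiv ?_
  ext t
  simp only [hone, one_smul, MulOpposite.op_one]
  simp
  exact Finset.sum_equiv (finCongr List.length_finRange) (by simp) (by simp)

open Filter Topology in
/-- If `W` and the vectors `A i x` span `V`, then `(t, h) ↦ E₁(t₁) ⋯ Eₙ(tₙ) h`, with `h ∈ W`, is a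
submersion at `(0, x)`, so its image is a neighbourhood of `x`. -/
lemma eventually_eq_prod_apply {V : Type*} [NormedAddCommGroup V] [NormedSpace ℂ V]
    [FiniteDimensional ℂ V] {n : ℕ} (A : Fin n → V →L[ℂ] V) (E : Fin n → ℂ → V →L[ℂ] V)
    (h0 : ∀ i, E i 0 = 1) (hE : ∀ i, HasStrictDerivAt (E i) (A i) 0)
    (W : Submodule ℂ V) (x : V) (hx : x ∈ W)
    (hspan : ∀ v, ∃ h ∈ W, ∃ t : Fin n → ℂ, v = h + ∑ i, t i • A i x) :
    ∀ᶠ z in 𝓝 x, ∃ t : Fin n → ℂ, ∃ h ∈ W,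
      z = ((List.finRange n).map fun i => E i (t i)).prod h := by
  have : CompleteSpace V := FiniteDimensional.complete ℂ V
  have : CompleteSpace W := FiniteDimensional.complete ℂ W
  obtain ⟨P, hP⟩ : ∃ P : (Fin n → ℂ) → V →L[ℂ] V,
    ∀ t, P t = ((List.finRange n).map fun i => E i (t i)).prod := ⟨_, fun _ => rfl⟩
  simp only [← hP]
  have hP' : HasStrictFDerivAt P (∑ i, (ContinuousLinearMap.proj (R := ℂ)
      (φ := fun _ : Fin n => ℂ) i).smulRight (A i)) 0 := by
    rw [funext hP]
    exact hasStrictFDerivAt_prod_of_one A E h0 hE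
  have hP0 : P 0 = 1 := by
    rw [hP]
    apply List.prod_eq_one
    simp only [List.mem_map]
    rintro _ ⟨i, _, rfl⟩
    exact h0 i
  clear hP h0 hE
  have h1 : HasStrictFDerivAt (fun p : (Fin n → ℂ) × W => P p.1) _ ((0 : Fin n → ℂ), (⟨x, hx⟩ : W)) :=
    hP'.comp ((0 : Fin n → ℂ), (⟨x, hx⟩ : W)) hasStrictFDerivAt_fst
  have h2 : HasStrictFDerivAt (fun p : (Fin n → ℂ) × W => (p.2 : V)) _
      ((0 : Fin n → ℂ), (⟨x, hx⟩ : W)) :=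
    W.subtypeL.hasStrictFDerivAt.comp ((0 : Fin n → ℂ), (⟨x, hx⟩ : W)) hasStrictFDerivAt_snd
  have hmap := (h1.clm_apply h2).map_nhds_eq_of_surj (by
    rw [LinearMap.range_eq_top]
    intro v
    obtain ⟨h, hh, t, rfl⟩ := hspan v
    exact ⟨(t, ⟨h, hh⟩), by simp [hP0]⟩)
  simp only [hP0] at hmap
  have h3 : ∀ᶠ z in 𝓝 x, z ∈ Set.range (fun p : (Fin n → ℂ) × W => P p.1 (p.2 : V)) := by
    refine Eventually.filter_mono hmap.ge ?_
    rw [eventually_map]; exact Eventually.of_forall fun p => ⟨p, rfl⟩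
  filter_upwards [h3] with z hz
  obtain ⟨⟨t, h⟩, rfl⟩ := hz
  exact ⟨t, h, h.2, rfl⟩

lemma hasStrictDerivAt_sum_pow_smul {F : Type*} [NormedAddCommGroup F] [NormedSpace ℂ F]
    (d : ℕ) (hd : d ≠ 0) (B : ℕ → F) :
    HasStrictDerivAt (fun t : ℂ => ∑ k ∈ Finset.range (d + 1),
      (((k.factorial : ℂ)⁻¹) * t ^ k) • B k) (B 1) 0 := by
  have h1 : ∀ k ∈ Finset.range (d + 1), HasStrictDerivAt
      (fun t : ℂ => (((k.factorial : ℂ)⁻¹) * t ^ k) • B k)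
      ((((k.factorial : ℂ)⁻¹) * (k * 0 ^ (k - 1))) • B k) 0 := fun k _ =>
    ((hasStrictDerivAt_pow k (0 : ℂ)).const_mul _).smul_const _
  refine (HasStrictDerivAt.fun_sum h1).congr_deriv ?_
  rw [Finset.sum_eq_single 1]
  · simp
  · intro k _ hk
    rcases k with _ | _ | k <;> simp at hk ⊢
  · intro h; simp at h; omega

/-- The exponential series of `g` truncated after degree `d`; it is the exponential of `g` when
`g ^ (d + 1) = 0`. The degree is a parameter so that on a subalgebra of `L` the series can be cut off at
`finrank ℂ L`, which makes it the restriction of `expNil`. -/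
noncomputable def expTrunc {V : Type*} [AddCommGroup V] [Module ℂ V] (d : ℕ) (g : Module.End ℂ V) :
    Module.End ℂ V :=
  ∑ k ∈ Finset.range (d + 1), ((k.factorial : ℂ)⁻¹) • g ^ k

open Filter Topology in
lemma eventually_eq_prod_expTrunc {V : Type*} [NormedAddCommGroup V] [NormedSpace ℂ V]
    [FiniteDimensional ℂ V] {n : ℕ} (d : ℕ) (hd : d ≠ 0) (A : Fin n → Module.End ℂ V)
    (W : Submodule ℂ V) (x : V) (hx : x ∈ W)
    (hspan : ∀ v, ∃ h ∈ W, ∃ t : Fin n → ℂ, v = h + ∑ i, t i • A i x) (v : V) :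
    ∀ᶠ s in 𝓝 (0 : ℂ), ∃ t : Fin n → ℂ, ∃ h ∈ W,
      x + s • v = ((List.finRange n).map fun i => expTrunc d (t i • A i)).prod h := by
  let c : Module.End ℂ V ≃ₐ[ℂ] (V →L[ℂ] V) := Module.End.toContinuousLinearMap V
  have hc : ∀ (g : Module.End ℂ V) (v : V), c g v = g v := fun _ _ => rfl
  have key := eventually_eq_prod_apply (fun i => c (A i))
    (fun i t => c (expTrunc d (t • A i))) (fun i => ?_) (fun i => ?_) W x hx ?_
  · have hcont : Tendsto (fun s : ℂ => x + s • v) (𝓝 0) (𝓝 x) := by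
      have : Continuous (fun s : ℂ => x + s • v) := by fun_prop
      simpa using this.tendsto 0
    filter_upwards [hcont.eventually key] with s hs
    obtain ⟨t, h, hh, hs⟩ := hs
    refine ⟨t, h, hh, ?_⟩
    rw [hs, ← hc, map_list_prod, List.map_map]
    rfl
  · simp [expTrunc, Finset.sum_range_succ', zero_pow]
  · have : (fun t : ℂ => c (expTrunc d (t • A i))) =
        fun t : ℂ => ∑ k ∈ Finset.range (d + 1), (((k.factorial : ℂ)⁻¹) * t ^ k) • c (A i) ^ k := by
      funext t
      simp [expTrunc, smul_pow, smul_smul]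
    rw [this]
    simpa using hasStrictDerivAt_sum_pow_smul (F := V →L[ℂ] V) d hd (fun k => c (A i) ^ k)
  · simpa only [hc] using hspan

open Filter Topology in
/-- A version of `eventually_eq_prod_expTrunc` for a vector space without a norm: along a line only
the topology of `ℂ` enters the statement, and any norm on `V` serves in the proof. -/
lemma eventually_line_eq_prod_apply {V : Type*} [AddCommGroup V] [Module ℂ V]
    [FiniteDimensional ℂ V] {n : ℕ} (d : ℕ) (hd : d ≠ 0) (A : Fin n → Module.End ℂ V)
    (W : Submodule ℂ V) (x : V) (hx : x ∈ W)
    (hspan : ∀ v, ∃ h ∈ W, ∃ t : Fin n → ℂ, v = h + ∑ i, t i • A i x) (v : V) :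
    ∀ᶠ s in 𝓝 (0 : ℂ), ∃ t : Fin n → ℂ, ∃ h ∈ W,
      x + s • v = ((List.finRange n).map fun i => expTrunc d (t i • A i)).prod h := by
  let e := (Module.finBasis ℂ V).equivFun
  let _ : NormedAddCommGroup V := NormedAddCommGroup.induced V _ e e.injective
  let _ : NormedSpace ℂ V := NormedSpace.induced ℂ V _ e
  exact eventually_eq_prod_expTrunc d hd A W x hx hspan v

/-! ### Groups generated by exponentials of ad-nilpotent elements -/

/-- The subgroup of the adjoint group generated by the `exp (ad y)` with `y ∈ N` such that `ad y` is
nilpotent on all of `L`. -/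
noncomputable def elemGroup [FiniteDimensional ℂ L] (N : LieSubalgebra ℂ L) :
    Subgroup (L ≃ₗ[ℂ] L) :=
  Subgroup.closure {φ : L ≃ₗ[ℂ] L | ∃ y ∈ N, IsNilpotent (LieAlgebra.ad ℂ L y) ∧
    (φ : L →ₗ[ℂ] L) = expNil (LieAlgebra.ad ℂ L y)}

lemma elemGroup_le_adjointGroup [FiniteDimensional ℂ L] (N : LieSubalgebra ℂ L) :
    elemGroup N ≤ adjointGroup L :=
  Subgroup.closure_mono fun _ ⟨y, _, hy⟩ => ⟨y, hy⟩

lemma adjointGroup_eq_elemGroup_top [FiniteDimensional ℂ L] :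
    adjointGroup L = elemGroup (⊤ : LieSubalgebra ℂ L) := by
  simp [adjointGroup, elemGroup]

lemma expNil_eq_exp [FiniteDimensional ℂ L] [LieAlgebra ℚ L] (g : Module.End ℂ L)
    (hg : IsNilpotent g) : expNil g = IsNilpotent.exp g := by
  have h : g ^ (Module.finrank ℂ L + 1) = 0 := by
    have := (LinearMap.isNilpotent_iff_charpoly g).mp hg
    have h2 := g.aeval_self_charpoly
    rw [this] at h2
    simp only [map_pow, Polynomial.aeval_X] at h2
    rw [pow_succ, h2, zero_mul]
  rw [IsNilpotent.exp_eq_sum h]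
  refine Finset.sum_congr rfl fun k _ => ?_
  ext x
  have := Rat.cast_smul_eq_qsmul (R := ℂ) ((k.factorial : ℚ)⁻¹) ((g ^ k) x)
  simpa using this

/-- The exponential of a nilpotent `ad y` is a Lie algebra automorphism, because `ad y` is a
derivation. -/
lemma exists_lieEquiv_eq_expNil [FiniteDimensional ℂ L] (y : L)
    (hy : IsNilpotent (LieAlgebra.ad ℂ L y)) :
    ∃ ψ : L ≃ₗ⁅ℂ⁆ L, ∀ z, ψ z = expNil (LieAlgebra.ad ℂ L y) z := by
  let _ : Module ℚ L := Module.compHom L (algebraMap ℚ ℂ)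
  let _ : LieAlgebra ℚ L := { lie_smul := fun t x m => lie_smul (algebraMap ℚ ℂ t) x m }
  have e : (LieDerivation.ad ℂ L y).toLinearMap = LieAlgebra.ad ℂ L y := by
    ext z
    simp
  have hy' : IsNilpotent (LieDerivation.ad ℂ L y).toLinearMap := e ▸ hy
  refine ⟨LieDerivation.exp (LieDerivation.ad ℂ L y) hy', fun z => ?_⟩
  rw [LieDerivation.exp_map_apply, expNil_eq_exp _ hy, e]

lemma exists_mem_elemGroup_eq_expNil [FiniteDimensional ℂ L] {N : LieSubalgebra ℂ L} {y : L}
    (hyN : y ∈ N) (hy : IsNilpotent (LieAlgebra.ad ℂ L y)) :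
    ∃ g ∈ elemGroup N, ∀ z, g z = expNil (LieAlgebra.ad ℂ L y) z := by
  obtain ⟨ψ, hψ⟩ := exists_lieEquiv_eq_expNil y hy
  exact ⟨ψ.toLinearEquiv, Subgroup.subset_closure ⟨y, hyN, hy, LinearMap.ext hψ⟩, hψ⟩

lemma map_lie_of_mem_adjointGroup [FiniteDimensional ℂ L] {g : L ≃ₗ[ℂ] L}
    (hg : g ∈ adjointGroup L) : ∀ x y, g ⁅x, y⁆ = ⁅g x, g y⁆ := by
  induction hg using Subgroup.closure_induction with
  | mem φ hφ =>
    obtain ⟨z, hz, h⟩ := hφ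
    obtain ⟨ψ, hψ⟩ := exists_lieEquiv_eq_expNil z hz
    have : ∀ x, φ x = ψ x := fun x => by rw [hψ, ← h]; rfl
    intro x y
    simp only [this, LieEquiv.map_lie]
  | one => intro x y; rfl
  | mul a b _ _ ha hb => intro x y; simp [ha, hb]
  | inv a _ ha =>
    intro x y
    change a.symm _ = ⁅a.symm x, a.symm y⁆
    rw [LinearEquiv.symm_apply_eq, ha]
    simp

/-- `elemGroup N` preserves every subspace normalized by `N`. -/
lemma map_eq_of_mem_elemGroup [FiniteDimensional ℂ L] {N : LieSubalgebra ℂ L} {g : L ≃ₗ[ℂ] L}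
    (hg : g ∈ elemGroup N) (P : Submodule ℂ L) (hP : ∀ x ∈ N, ∀ y ∈ P, ⁅x, y⁆ ∈ P) :
    P.map (g : L →ₗ[ℂ] L) = P := by
  have key : ∀ φ : L ≃ₗ[ℂ] L, (∀ x ∈ P, φ x ∈ P) → P.map (φ : L →ₗ[ℂ] L) = P := by
    intro φ h
    refine Submodule.eq_of_le_of_finrank_eq (Submodule.map_le_iff_le_comap.mpr h) ?_
    exact (φ.submoduleMap P).finrank_eq.symm
  induction hg using Subgroup.closure_induction with
  | mem φ hφ =>
    obtain ⟨y, hyN, -, h⟩ := hφ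
    refine key φ fun x hx => ?_
    change (φ : L →ₗ[ℂ] L) x ∈ P
    have hk : ∀ k : ℕ, (LieAlgebra.ad ℂ L y ^ k) x ∈ P := by
      intro k
      induction k with
      | zero => simpa
      | succ k ih => rw [pow_succ']; exact hP y hyN _ ih
    rw [h, expNil, LinearMap.sum_apply]
    exact sum_mem fun k _ => P.smul_mem _ (hk k)
  | one => exact key 1 fun x hx => hx
  | mul a b _ _ ha hb =>
    refine key _ fun x hx => ?_
    have h1 : b x ∈ P := by rw [← hb]; exact ⟨x, hx, rfl⟩
    rw [← ha]; exact ⟨b x, h1, rfl⟩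
  | inv a _ ha =>
    refine key _ fun x hx => ?_
    rw [← ha] at hx
    obtain ⟨y, hy, rfl⟩ := hx
    change a.symm (a y) ∈ P
    simpa using hy

open LieSubalgebra in
lemma map_mem_engel_iff (g : L ≃ₗ[ℂ] L) (hg : ∀ x y, g ⁅x, y⁆ = ⁅g x, g y⁆) (x y : L) :
    g y ∈ engel ℂ (g x) ↔ y ∈ engel ℂ x := by
  have h : ∀ n, ((LieAlgebra.ad ℂ L (g x)) ^ n) (g y) = g (((LieAlgebra.ad ℂ L x) ^ n) y) := by
    intro n
    induction n with
    | zero => rfl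
    | succ n ih => rw [pow_succ', pow_succ', Module.End.mul_apply, ih]; simp [hg]
  simp [mem_engel_iff, h]

open LieSubalgebra in
lemma map_engel (g : L ≃ₗ[ℂ] L) (hg : ∀ x y, g ⁅x, y⁆ = ⁅g x, g y⁆) (x : L) :
    (engel ℂ x).toSubmodule.map (g : L →ₗ[ℂ] L) = (engel ℂ (g x)).toSubmodule := by
  ext z
  constructor
  · rintro ⟨y, hy, rfl⟩
    exact (map_mem_engel_iff g hg x y).mpr hy
  · intro hz
    refine ⟨g.symm z, (map_mem_engel_iff g hg x _).mp (by simpa using hz), by simp⟩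

/-! ### Generalized eigenspaces of `ad x` -/

/-- Elements of a generalized eigenspace of `ad x` for a nonzero eigenvalue are ad-nilpotent: they
shift the generalized eigenspaces of `ad x`, of which only finitely many are nonzero. -/
lemma isNilpotent_ad_of_mem_maxGenEigenspace [FiniteDimensional ℂ L] {x y : L} {μ : ℂ}
    (hμ : μ ≠ 0) (hy : y ∈ (LieAlgebra.ad ℂ L x).maxGenEigenspace μ) :
    IsNilpotent (LieAlgebra.ad ℂ L y) := by
  refine Module.End.isNilpotent_iff_of_finite.mpr fun m => ?_
  have hm : m ∈ ⨆ ν, (LieAlgebra.ad ℂ L x).maxGenEigenspace ν := by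
    rw [Module.End.iSup_maxGenEigenspace_eq_top]; trivial
  induction hm using Submodule.iSup_induction' with
  | zero => exact ⟨0, map_zero _⟩
  | mem ν m hm =>
    have hs : ∀ n : ℕ, (LieAlgebra.ad ℂ L y ^ n) m ∈
        (LieAlgebra.ad ℂ L x).maxGenEigenspace (n * μ + ν) := by
      intro n
      induction n with
      | zero => simpa using hm
      | succ n ih =>
        have := LieModule.lie_mem_maxGenEigenspace_toEnd (M := L) hy ih
        rw [pow_succ']
        have e : ((n + 1 : ℕ) : ℂ) * μ + ν = μ + (n * μ + ν) := by push_cast; ring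
        rw [e]
        exact this
    by_contra hcon
    push Not at hcon
    have hinj : Function.Injective fun n : ℕ => (n : ℂ) * μ + ν := by
      intro a b hab
      simpa [hμ] using hab
    have hfin := (LieAlgebra.ad ℂ L x).finite_hasEigenvalue
    refine Set.infinite_of_injective_forall_mem hinj (fun n => ?_) hfin
    have hn : (LieAlgebra.ad ℂ L x).HasUnifEigenvalue (n * μ + ν) ⊤ := fun h => hcon n <| by
      have := hs n
      rwa [Module.End.maxGenEigenspace, h, Submodule.mem_bot] at this
    exact hn.lt one_pos
  | add m₁ m₂ hm₁ hm₂ hm₁' hm₂' =>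
    obtain ⟨n₁, hn₁⟩ := hm₁'
    obtain ⟨n₂, hn₂⟩ := hm₂'
    refine ⟨max n₁ n₂, ?_⟩
    rw [map_add, Module.End.pow_map_zero_of_le le_sup_left hn₁,
      Module.End.pow_map_zero_of_le le_sup_right hn₂, add_zero]

lemma exists_mem_maxGenEigenspace_apply_eq {V : Type*} [AddCommGroup V] [Module ℂ V]
    [FiniteDimensional ℂ V] (f : Module.End ℂ V) {μ : ℂ} (hμ : μ ≠ 0) {v : V}
    (hv : v ∈ f.maxGenEigenspace μ) : ∃ w ∈ f.maxGenEigenspace μ, f w = v := by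
  have hst : ∀ w ∈ f.maxGenEigenspace μ, f w ∈ f.maxGenEigenspace μ :=
    Module.End.mapsTo_maxGenEigenspace_of_comm (Commute.refl f) μ
  have hinj : Function.Injective (f.restrict hst) := by
    rw [← LinearMap.ker_eq_bot, Submodule.eq_bot_iff]
    rintro ⟨w, hw⟩ h
    have h0 : f w = 0 := congrArg Subtype.val h
    have hw0 : w ∈ f.maxGenEigenspace 0 :=
      Module.End.mem_maxGenEigenspace _ _ _ |>.mpr ⟨1, by simpa using h0⟩
    have := (Module.End.independent_maxGenEigenspace f).pairwiseDisjoint hμ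
    exact Subtype.ext ((Submodule.disjoint_def.mp this) w hw hw0)
  obtain ⟨⟨w, hw⟩, h⟩ := LinearMap.surjective_of_injective hinj ⟨v, hv⟩
  exact ⟨w, hw, congrArg Subtype.val h⟩

lemma coe_ad_pow_apply (N : LieSubalgebra ℂ L) (y n : N) (k : ℕ) :
    (((LieAlgebra.ad ℂ N y ^ k) n : N) : L) = (LieAlgebra.ad ℂ L (y : L) ^ k) (n : L) := by
  induction k with
  | zero => rfl
  | succ k ih => simp [pow_succ', ← ih]

lemma coe_mem_maxGenEigenspace (N : LieSubalgebra ℂ L) {x y : N} {μ : ℂ}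
    (hy : y ∈ (LieAlgebra.ad ℂ N x).maxGenEigenspace μ) :
    (y : L) ∈ (LieAlgebra.ad ℂ L (x : L)).maxGenEigenspace μ := by
  rw [Module.End.mem_maxGenEigenspace] at hy ⊢
  obtain ⟨k, hk⟩ := hy
  refine ⟨k, ?_⟩
  have h : ∀ k : ℕ, ((((LieAlgebra.ad ℂ N x - μ • 1) ^ k) y : N) : L) =
      ((LieAlgebra.ad ℂ L (x : L) - μ • 1) ^ k) (y : L) := by
    intro k
    induction k with
    | zero => rfl
    | succ k ih => simp [pow_succ', ← ih]
  rw [← h, hk]; rfl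

lemma exists_mem_elemGroup_eq_prod [FiniteDimensional ℂ L] (N : LieSubalgebra ℂ L) {n : ℕ}
    (y : Fin n → N) (hy : ∀ i, IsNilpotent (LieAlgebra.ad ℂ L (y i : L))) (t : Fin n → ℂ)
    (l : List (Fin n)) :
    ∃ g ∈ elemGroup N, ∀ h : N, (((l.map fun i =>
      expTrunc (Module.finrank ℂ L) (t i • LieAlgebra.ad ℂ N (y i))).prod h : N) : L) = g h := by
  induction l with
  | nil => exact ⟨1, one_mem _, fun h => rfl⟩
  | cons i l ih =>
    obtain ⟨g, hg, h⟩ := ih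
    obtain ⟨g', hg', h'⟩ := exists_mem_elemGroup_eq_expNil (N := N) (y := ((t i • y i : N) : L))
      (t i • y i).2 (by
        have := (hy i).smul (t i)
        simpa using this)
    refine ⟨g' * g, mul_mem hg' hg, fun z => ?_⟩
    rw [List.map_cons, List.prod_cons, Module.End.mul_apply]
    change _ = g' (g z)
    rw [← h, h', expTrunc, expNil, ← map_smul]
    simp only [LinearMap.sum_apply, LinearMap.smul_apply, ← coe_ad_pow_apply]
    simp

open LieSubalgebra in
/-- Near `x ∈ N`, every point of the line through `x` in the direction of a vector of `N` can be
moved by an element of `elemGroup N` into the Engel subalgebra of `x`. Infinitesimally this says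
that `N` is spanned by `engel x ∩ N` and the brackets `⁅y, x⁆`, with `y` in the generalized
eigenspaces of `ad x` for nonzero eigenvalues. -/
lemma eventually_line_mem_orbit_engel [FiniteDimensional ℂ L] [Nontrivial L]
    (N : LieSubalgebra ℂ L) {x v : L}
    (hx : x ∈ N) (hv : v ∈ N) : ∀ᶠ s in nhds (0 : ℂ), ∃ g ∈ elemGroup N, ∃ h ∈ N,
      h ∈ engel ℂ x ∧ x + s • v = g h := by
  lift x to N using hx
  lift v to N using hv
  let S : Set N := {y | ∃ μ ≠ 0, y ∈ (LieAlgebra.ad ℂ N x).maxGenEigenspace μ}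
  obtain ⟨b, hbS, hbspan, hbli⟩ := exists_linearIndependent ℂ ((fun y : N => ⁅y, x⁆) '' S)
  obtain ⟨n, e, he⟩ : ∃ (n : ℕ) (e : Fin n → N), Set.range e = b := by
    obtain ⟨n, e, -, he⟩ := (show b.Finite from hbli.setFinite).fin_param
    exact ⟨n, e, he⟩
  have hch : ∀ i, ∃ y ∈ S, ⁅y, x⁆ = e i := fun i => hbS (he ▸ Set.mem_range_self i)
  choose y hyS hye using hch
  have hnil : ∀ i, IsNilpotent (LieAlgebra.ad ℂ L (y i : L)) := fun i => by
    obtain ⟨μ, hμ, h⟩ := hyS i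
    exact isNilpotent_ad_of_mem_maxGenEigenspace hμ (coe_mem_maxGenEigenspace N h)
  let W : Submodule ℂ N := (engel ℂ (x : L)).toSubmodule.comap N.toSubmodule.subtype
  have hxW : x ∈ W := self_mem_engel ℂ (x : L)
  have hspan : ∀ w : N, ∃ h ∈ W, ∃ t : Fin n → ℂ,
      w = h + ∑ i, t i • (LieAlgebra.ad ℂ N (y i)) x := by
    intro w
    have hw : w ∈ W ⊔ Submodule.span ℂ (Set.range e) := by
      rw [he, hbspan]
      have hw : w ∈ ⨆ ν, (LieAlgebra.ad ℂ N x).maxGenEigenspace ν := by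
        rw [Module.End.iSup_maxGenEigenspace_eq_top]; trivial
      revert hw
      apply iSup_le (a := W ⊔ _)
      intro ν u hu
      by_cases hν : ν = 0
      · subst hν
        refine Submodule.mem_sup_left ?_
        obtain ⟨k, hk⟩ := (Module.End.mem_maxGenEigenspace _ _ _).mp
          (coe_mem_maxGenEigenspace N hu)
        exact (mem_engel_iff ℂ _ _).mpr ⟨k, by simp at hk; exact hk⟩
      · refine Submodule.mem_sup_right ?_
        obtain ⟨z, hz, hzu⟩ := exists_mem_maxGenEigenspace_apply_eq _ hν hu
        have : u = -⁅z, x⁆ := by rw [← hzu]; simp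
        rw [this]
        exact neg_mem (Submodule.subset_span ⟨z, ⟨ν, hν, hz⟩, rfl⟩)
    obtain ⟨h, hh, u, hu, rfl⟩ := Submodule.mem_sup.mp hw
    obtain ⟨t, rfl⟩ := (Submodule.mem_span_range_iff_exists_fun ℂ).mp hu
    exact ⟨h, hh, t, by simp [hye]⟩
  filter_upwards [eventually_line_eq_prod_apply (Module.finrank ℂ L) Module.finrank_pos.ne'
    (fun i => LieAlgebra.ad ℂ N (y i)) W x hxW hspan v] with s hs
  obtain ⟨t, h, hh, hs⟩ := hs
  obtain ⟨g, hg, hgp⟩ := exists_mem_elemGroup_eq_prod N y hnil t (List.finRange n)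
  refine ⟨g, hg, h, h.2, hh, ?_⟩
  rw [← hgp, ← hs]
  rfl

/-! ### Regular elements -/

/-- Along a line through a regular element, non-regularity is the vanishing of a nonzero polynomial
in one variable. -/
lemma finite_setOf_not_isRegular_line [FiniteDimensional ℂ L] (x v : L) (s₀ : ℂ)
    (h₀ : LieAlgebra.IsRegular ℂ (x + s₀ • v)) :
    {s : ℂ | ¬ LieAlgebra.IsRegular ℂ (x + s • v)}.Finite := by
  classical
  let b := Module.finBasis ℂ L
  let Q := (LinearMap.polyCharpoly (LieAlgebra.ad ℂ L : L →ₗ[ℂ] Module.End ℂ L) b).coeff (LieAlgebra.rank ℂ L)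
  let P : Polynomial ℂ := MvPolynomial.aeval
    (fun i => Polynomial.C (b.repr x i) + Polynomial.X * Polynomial.C (b.repr v i)) Q
  have hP : ∀ s, P.eval s = MvPolynomial.eval (b.repr (x + s • v)) Q := by
    intro s
    have : (Polynomial.aeval s) P = MvPolynomial.aeval (b.repr (x + s • v)) Q := by
      change ((Polynomial.aeval s).comp (MvPolynomial.aeval _)) Q = _
      rw [MvPolynomial.comp_aeval]
      congr 2
      ext i
      simp only [map_add, map_smul, Finsupp.add_apply, Finsupp.smul_apply, smul_eq_mul,
        map_mul, Polynomial.aeval_C, Polynomial.aeval_X, Algebra.algebraMap_self, RingHom.id_apply]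
    simpa [Polynomial.coe_aeval_eq_eval, MvPolynomial.coe_aeval_eq_eval] using this
  have hreg : ∀ s, LieAlgebra.IsRegular ℂ (x + s • v) ↔ P.eval s ≠ 0 := fun s => by
    rw [hP]
    exact LieAlgebra.isRegular_iff_coeff_polyCharpoly_rank_ne_zero ℂ b _
  have hP0 : P ≠ 0 := by
    rintro h
    exact (hreg s₀).mp h₀ (by simp [h])
  refine (P.roots.toFinset.finite_toSet).subset fun s hs => ?_
  have : P.eval s = 0 := by simpa [hreg] using hs
  simpa [hP0] using this

open LieSubalgebra in
/-- The Engel subalgebra of a regular element has minimal dimension, hence is contained in the Engel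
subalgebra of each of its elements. -/
lemma engel_le_engel_of_isRegular [FiniteDimensional ℂ L] {x h : L}
    (hx : LieAlgebra.IsRegular ℂ x) (hh : h ∈ engel ℂ x) : engel ℂ x ≤ engel ℂ h := by
  set Ex : {engel ℂ z | z ∈ engel ℂ x} := ⟨engel ℂ x, x, self_mem_engel _ _, rfl⟩
  suffices IsBot Ex from this ⟨engel ℂ h, h, hh, rfl⟩
  apply LieAlgebra.engel_isBot_of_isMin
    ((Cardinal.natCast_le_aleph0).trans <| Cardinal.infinite_iff.mp inferInstance)
    (engel ℂ x) Ex le_rfl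
  rintro ⟨_, y, hy, rfl⟩ hyx
  suffices Module.finrank ℂ (engel ℂ x) ≤ Module.finrank ℂ (engel ℂ y) by
    suffices engel ℂ y = engel ℂ x from this.ge
    apply LieSubalgebra.toSubmodule_injective
    exact Submodule.eq_of_le_of_finrank_le hyx this
  rw [(LieAlgebra.isRegular_iff_finrank_engel_eq_rank ℂ x).mp hx]
  apply LieAlgebra.rank_le_finrank_engel

open LieSubalgebra in
lemma engel_eq_engel_of_isRegular [FiniteDimensional ℂ L] {x h : L}
    (hx : LieAlgebra.IsRegular ℂ x) (hh : h ∈ engel ℂ x) (hr : LieAlgebra.IsRegular ℂ h) :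
    engel ℂ x = engel ℂ h := by
  apply LieSubalgebra.toSubmodule_injective
  refine Submodule.eq_of_le_of_finrank_le (engel_le_engel_of_isRegular hx hh) ?_
  exact ((LieAlgebra.isRegular_iff_finrank_engel_eq_rank ℂ h).mp hr).trans
    ((LieAlgebra.isRegular_iff_finrank_engel_eq_rank ℂ x).mp hx).symm |>.le

open LieSubalgebra in
lemma finrank_engel_map (g : L ≃ₗ[ℂ] L) (hg : ∀ x y, g ⁅x, y⁆ = ⁅g x, g y⁆) (x : L) :
    Module.finrank ℂ (engel ℂ (g x)) = Module.finrank ℂ (engel ℂ x) := by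
  have h : Module.finrank ℂ (engel ℂ (g x)).toSubmodule =
      Module.finrank ℂ (engel ℂ x).toSubmodule := by
    rw [← map_engel g hg]
    exact (g.submoduleMap _).finrank_eq.symm
  exact h

lemma isRegular_map_iff [FiniteDimensional ℂ L] (g : L ≃ₗ[ℂ] L)
    (hg : ∀ x y, g ⁅x, y⁆ = ⁅g x, g y⁆) (x : L) :
    LieAlgebra.IsRegular ℂ (g x) ↔ LieAlgebra.IsRegular ℂ x := by
  rw [LieAlgebra.isRegular_iff_finrank_engel_eq_rank, LieAlgebra.isRegular_iff_finrank_engel_eq_rank,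
    finrank_engel_map g hg]

open LieSubalgebra in
/-- If `engel x` is abelian then `x` is regular: moving a regular element close to `x` into
`engel x` yields a regular `h ∈ engel x`, and `engel x ≤ engel h`. -/
lemma isRegular_of_isLieAbelian_engel [FiniteDimensional ℂ L] {x : L}
    (hab : IsLieAbelian (engel ℂ x)) : LieAlgebra.IsRegular ℂ x := by
  obtain ⟨y, hy⟩ := LieAlgebra.exists_isRegular ℂ L
  rcases subsingleton_or_nontrivial L with hL | hL
  · rwa [Subsingleton.elim x y]
  have hfin := finite_setOf_not_isRegular_line x (y - x) 1 (by simpa using hy)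
  have hev := eventually_line_mem_orbit_engel (⊤ : LieSubalgebra ℂ L) (x := x) (v := y - x)
    trivial trivial
  have hne : ∃ s : ℂ, LieAlgebra.IsRegular ℂ (x + s • (y - x)) ∧
      ∃ g ∈ elemGroup (⊤ : LieSubalgebra ℂ L), ∃ h ∈ (⊤ : LieSubalgebra ℂ L),
        h ∈ engel ℂ x ∧ x + s • (y - x) = g h := by
    have h1 := hev.filter_mono (nhdsWithin_le_nhds (s := {0}ᶜ))
    have h2 : ∀ᶠ s in nhdsWithin (0 : ℂ) {0}ᶜ, LieAlgebra.IsRegular ℂ (x + s • (y - x)) := by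
      have := (hfin.subset (Set.sdiff_subset (t := {0}))).isClosed.isOpen_compl.mem_nhds
        (x := 0) (by simp)
      filter_upwards [nhdsWithin_le_nhds this, self_mem_nhdsWithin] with s hs hs0
      by_contra hcon
      exact hs ⟨hcon, hs0⟩
    obtain ⟨s, hs⟩ := (h2.and h1).exists
    exact ⟨s, hs⟩
  obtain ⟨s, hs, g, hg, h, -, hh, he⟩ := hne
  have hgl := map_lie_of_mem_adjointGroup (elemGroup_le_adjointGroup _ hg)
  rw [he, isRegular_map_iff g hgl] at hs
  rw [LieAlgebra.isRegular_iff_finrank_engel_eq_rank] at hs ⊢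
  refine le_antisymm ?_ (LieAlgebra.rank_le_finrank_engel ℂ x)
  rw [← hs]
  have hle : (engel ℂ x).toSubmodule ≤ (engel ℂ h).toSubmodule := by
    intro z hz
    refine (mem_engel_iff ℂ _ _).mpr ⟨1, ?_⟩
    have := trivial_lie_zero (engel ℂ x) (engel ℂ x) ⟨h, hh⟩ ⟨z, hz⟩
    simpa using congrArg Subtype.val this
  exact Submodule.finrank_mono hle

open LieSubalgebra in
/-- The Engel subalgebras of two regular elements of `L` lying in a subalgebra `N` are conjugate
under `elemGroup N`. The regular elements on the complex line joining them form a connected set,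
on which conjugacy of the Engel subalgebras is an open relation. -/
lemma exists_map_engel_eq [FiniteDimensional ℂ L] (N : LieSubalgebra ℂ L) {x y : L}
    (hx : x ∈ N) (hy : y ∈ N) (hxr : LieAlgebra.IsRegular ℂ x) (hyr : LieAlgebra.IsRegular ℂ y) :
    ∃ g ∈ elemGroup N,
      (engel ℂ x).toSubmodule.map (g : L →ₗ[ℂ] L) = (engel ℂ y).toSubmodule := by
  rcases subsingleton_or_nontrivial L with hL | hL
  · exact ⟨1, one_mem _, Subsingleton.elim _ _⟩
  have hfin := finite_setOf_not_isRegular_line x (y - x) 0 (by simpa using hxr)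
  set S : Set ℂ := {s : ℂ | ¬ LieAlgebra.IsRegular ℂ (x + s • (y - x))}ᶜ with hS
  have hconn : IsPreconnected S :=
    (hfin.countable.isConnected_compl_of_one_lt_rank (by simp)).isPreconnected
  let r : ℂ → ℂ → Prop := fun s t => ∃ g ∈ elemGroup N,
    (engel ℂ (x + s • (y - x))).toSubmodule.map (g : L →ₗ[ℂ] L) =
      (engel ℂ (x + t • (y - x))).toSubmodule
  have hrsymm : ∀ s t, r s t → r t s := by
    rintro s t ⟨g, hg, h⟩
    refine ⟨g⁻¹, inv_mem hg, ?_⟩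
    rw [← h, ← Submodule.map_comp]
    convert Submodule.map_id _
    ext z
    exact g.symm_apply_apply z
  have hrtrans : ∀ s t u, r s t → r t u → r s u := by
    rintro s t u ⟨g, hg, h⟩ ⟨g', hg', h'⟩
    refine ⟨g' * g, mul_mem hg' hg, ?_⟩
    rw [← h', ← h, ← Submodule.map_comp]
    rfl
  have hloc : ∀ s ∈ S, ∀ᶠ t in nhdsWithin s S, r s t := by
    intro s hs
    have hs : LieAlgebra.IsRegular ℂ (x + s • (y - x)) := by simpa [hS] using hs
    have hd : y - x ∈ N := sub_mem hy hx
    have hev := eventually_line_mem_orbit_engel N (x := x + s • (y - x)) (v := y - x)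
      (add_mem hx (N.smul_mem _ hd)) hd
    have htend : Filter.Tendsto (fun t : ℂ => t - s) (nhds s) (nhds 0) := by
      have : Continuous fun t : ℂ => t - s := by fun_prop
      simpa using this.tendsto s
    filter_upwards [nhdsWithin_le_nhds (htend.eventually hev), self_mem_nhdsWithin] with t ht htS
    have htr : LieAlgebra.IsRegular ℂ (x + t • (y - x)) := by simpa [hS] using htS
    obtain ⟨g, hg, h, -, hh, he⟩ := ht
    have he : x + t • (y - x) = g h := by rw [← he, sub_smul]; abel
    have hgl := map_lie_of_mem_adjointGroup (elemGroup_le_adjointGroup _ hg)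
    refine ⟨g, hg, ?_⟩
    rw [he] at htr ⊢
    rw [isRegular_map_iff g hgl] at htr
    rw [engel_eq_engel_of_isRegular hs hh htr, map_engel g hgl]
  have h0 : (0 : ℂ) ∈ S := by simpa [hS] using hxr
  have h1 : (1 : ℂ) ∈ S := by simpa [hS] using hyr
  have := hconn.induction₂ r hloc (fun s t u _ _ _ => hrtrans s t u)
    (fun s t _ _ => hrsymm s t) h0 h1
  simpa [r] using this

/-! ### Root spaces and regular subalgebras -/

section Cartan

variable [FiniteDimensional ℂ L] [LieAlgebra.IsSemisimple ℂ L]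
  (H : LieSubalgebra ℂ L) [H.IsCartanSubalgebra]

lemma rootSpaceOf_eq_rootSpace (α : Module.Dual ℂ H) :
    rootSpaceOf H α = (LieAlgebra.rootSpace H α).toSubmodule := by
  refine le_antisymm (fun x hx => ?_) fun x hx h =>
    LieAlgebra.IsKilling.lie_eq_smul_of_mem_rootSpace hx h
  exact LieModule.weightSpace_le_genWeightSpace L (α : H → ℂ)
    ((LieModule.mem_weightSpace _ _).mpr fun h => hx h)

variable {H} in
lemma exists_weight_of_isRootOf {α : Module.Dual ℂ H} (hα : IsRootOf H α) :
    ∃ χ : LieModule.Weight ℂ H L, χ.IsNonZero ∧ χ.toLinear = α := by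
  refine ⟨⟨α, fun h => hα.2 (by
    rw [rootSpaceOf_eq_rootSpace]
    exact (LieSubmodule.toSubmodule_eq_bot _).mpr h)⟩, fun h => hα.1 ?_, rfl⟩
  ext x
  exact congrFun h x

variable {H} in
/-- Root spaces are one-dimensional. -/
lemma exists_smul_eq_of_isRootOf {α : Module.Dual ℂ H} (hα : IsRootOf H α) {w z : L}
    (hw : w ∈ rootSpaceOf H α) (hw0 : w ≠ 0) (hz : z ∈ rootSpaceOf H α) :
    ∃ c : ℂ, c • w = z := by
  obtain ⟨χ, hχ, rfl⟩ := exists_weight_of_isRootOf hα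
  rw [rootSpaceOf_eq_rootSpace] at hw hz
  have h1 := LieAlgebra.IsKilling.finrank_rootSpace_eq_one χ hχ
  obtain ⟨c, hc⟩ := exists_smul_eq_of_finrank_eq_one h1 (x := ⟨w, hw⟩)
    (fun h => hw0 (congrArg Subtype.val h)) ⟨z, hz⟩
  exact ⟨c, congrArg Subtype.val hc⟩

/-- A subspace stable under `H` is spanned by its intersections with `H` and the root spaces. -/
lemma le_of_inf_rootSpaceOf_le (A T : Submodule ℂ L) (hA : ∀ x ∈ H, ∀ y ∈ A, ⁅x, y⁆ ∈ A)
    (hH : ∀ z ∈ A, z ∈ H → z ∈ T)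
    (hroot : ∀ α : Module.Dual ℂ H, IsRootOf H α → ∀ z ∈ A, z ∈ rootSpaceOf H α → z ∈ T) :
    A ≤ T := by
  let A' : LieSubmodule ℂ H L := { A with lie_mem := fun {x m} hm => hA x x.2 m hm }
  intro z hz
  have hz' : z ∈ A'.toSubmodule := hz
  rw [LieModule.eq_iSup_inf_genWeightSpace (K := ℂ) (L := H) (M := L) A', LieSubmodule.iSup_toSubmodule] at hz'
  revert hz'
  apply iSup_le (a := T)
  rintro χ u ⟨huA, hu⟩
  by_cases hχ : χ.IsZero
  · refine hH u huA ?_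
    rw [LieModule.Weight.IsZero] at hχ
    have hu : u ∈ LieAlgebra.rootSpace H χ := hu
    rw [hχ, LieAlgebra.rootSpace_zero_eq] at hu
    simpa using hu
  · by_cases hu0 : u = 0
    · rw [hu0]; exact T.zero_mem
    have hu' : u ∈ rootSpaceOf H χ.toLinear := by rw [rootSpaceOf_eq_rootSpace]; exact hu
    refine hroot χ.toLinear ⟨LieModule.Weight.coe_toLinear_ne_zero_iff.mpr hχ, ?_⟩ u huA hu'
    exact fun h => hu0 (by simpa [h] using hu')

open LieSubalgebra in
/-- A Cartan subalgebra of a semisimple Lie algebra is the Engel subalgebra of a regular element: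
any element on which no root vanishes will do. -/
lemma exists_isRegular_engel_eq :
    ∃ x ∈ H, LieAlgebra.IsRegular ℂ x ∧ engel ℂ x = H := by
  obtain ⟨x, hx⟩ := Module.Dual.exists_forall_ne_zero_of_forall_exists
    (fun χ : {χ : LieModule.Weight ℂ H L // χ.IsNonZero} => χ.1.toLinear) (fun χ => by
      by_contra! h
      exact LieModule.Weight.coe_toLinear_ne_zero_iff.mpr χ.2 (LinearMap.ext h))
  have hHle : H ≤ engel ℂ (x : L) := by
    intro z hz
    refine (mem_engel_iff ℂ _ _).mpr ⟨1, ?_⟩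
    have := trivial_lie_zero H H x ⟨z, hz⟩
    simpa using congrArg Subtype.val this
  have he : engel ℂ (x : L) = H := by
    refine le_antisymm ?_ hHle
    refine le_of_inf_rootSpaceOf_le H (engel ℂ (x : L)).toSubmodule H.toSubmodule
      (fun y hy z hz => (engel ℂ (x : L)).lie_mem (hHle hy) hz) (fun z _ hz => hz) ?_
    intro α hα z hz hzα
    obtain ⟨k, hk⟩ := (mem_engel_iff ℂ _ _).mp hz
    have hpow : ∀ k : ℕ, (LieAlgebra.ad ℂ L (x : L) ^ k) z = α x ^ k • z := by
      intro k
      induction k with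
      | zero => simp
      | succ k ih =>
        rw [pow_succ', Module.End.mul_apply, ih, map_smul, LieAlgebra.ad_apply, hzα x, smul_smul,
          pow_succ]
    obtain ⟨χ, hχ, rfl⟩ := exists_weight_of_isRootOf hα
    have h0 : (χ : H →ₗ[ℂ] ℂ) x ≠ 0 := hx ⟨χ, hχ⟩
    rw [hpow] at hk
    have : z = 0 := (smul_eq_zero.mp hk).resolve_left (pow_ne_zero k h0)
    rw [this]; exact H.zero_mem
  refine ⟨x, x.2, isRegular_of_isLieAbelian_engel ?_, he⟩
  rw [he]; infer_instance

end Cartan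

/-- A semisimple Lie algebra is perfect. -/
lemma lie_top_top_of_isSemisimple (A : Type*) [LieRing A] [LieAlgebra ℂ A]
    [h : LieAlgebra.IsSemisimple ℂ A] : ⁅(⊤ : LieIdeal ℂ A), (⊤ : LieIdeal ℂ A)⁆ = ⊤ := by
  refine top_le_iff.mp (h.sSup_atoms_eq_top.ge.trans (sSup_le fun I hI => ?_))
  rw [← lie_eq_self_of_isAtom_of_nonabelian I hI (h.non_abelian_of_isAtom I hI)]
  exact LieSubmodule.mono_lie le_top le_top

/-- A regular semisimple subalgebra is generated by the root spaces it contains: modulo the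
subalgebra they generate it lies in the abelian algebra `H`, and it is perfect. -/
lemma le_lieSpan_rootsIn [FiniteDimensional ℂ L] [LieAlgebra.IsSemisimple ℂ L]
    (H : LieSubalgebra ℂ L) [H.IsCartanSubalgebra] (a : LieSubalgebra ℂ L)
    (hreg : ∀ x ∈ H, ∀ y ∈ a, ⁅x, y⁆ ∈ a) (hss : LieAlgebra.IsSemisimple ℂ a) :
    a ≤ LieSubalgebra.lieSpan ℂ L {z | ∃ α ∈ rootsIn H a, z ∈ rootSpaceOf H α} := by
  set b := LieSubalgebra.lieSpan ℂ L {z | ∃ α ∈ rootsIn H a, z ∈ rootSpaceOf H α} with hb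
  have hbH : ∀ x ∈ H, ∀ y ∈ b, ⁅x, y⁆ ∈ b := by
    intro x hx y hy
    rw [hb] at hy
    induction hy using LieSubalgebra.lieSpan_induction with
    | mem y hy =>
      obtain ⟨α, hα, hy⟩ := hy
      rw [hy ⟨x, hx⟩]
      exact b.smul_mem _ (LieSubalgebra.subset_lieSpan ⟨α, hα, hy⟩)
    | zero => rw [lie_zero]; exact b.zero_mem
    | add u v _ _ hu hv => rw [lie_add]; exact b.add_mem hu hv
    | smul t u _ hu => rw [lie_smul]; exact b.smul_mem _ hu
    | lie u v hu' hv' hu hv =>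
      rw [leibniz_lie]
      exact b.add_mem (b.lie_mem hu hv') (b.lie_mem hu' hv)
  have hdec : a.toSubmodule ≤ H.toSubmodule ⊔ b.toSubmodule := by
    refine le_of_inf_rootSpaceOf_le H _ _ hreg (fun z _ hz => Submodule.mem_sup_left hz) ?_
    intro α hα z hz hzα
    by_cases hz0 : z = 0
    · rw [hz0]; exact zero_mem _
    refine Submodule.mem_sup_right (LieSubalgebra.subset_lieSpan ⟨α, ⟨hα, fun w hw => ?_⟩, hzα⟩)
    obtain ⟨c, rfl⟩ := exists_smul_eq_of_isRootOf hα hzα hz0 hw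
    exact a.smul_mem c hz
  have hbr : ∀ y ∈ a, ∀ z ∈ a, ⁅y, z⁆ ∈ b := by
    intro y hy z hz
    obtain ⟨h₁, hh₁, b₁, hb₁, rfl⟩ := Submodule.mem_sup.mp (hdec hy)
    obtain ⟨h₂, hh₂, b₂, hb₂, rfl⟩ := Submodule.mem_sup.mp (hdec hz)
    have h0 : ⁅h₁, h₂⁆ = 0 := by
      have := trivial_lie_zero H H ⟨h₁, hh₁⟩ ⟨h₂, hh₂⟩
      simpa using congrArg Subtype.val this
    rw [add_lie, lie_add, lie_add, h0, zero_add, ← lie_skew b₁ h₂]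
    exact b.add_mem (hbH _ hh₁ _ hb₂) (b.add_mem (neg_mem (hbH _ hh₂ _ hb₁)) (b.lie_mem hb₁ hb₂))
  intro z hz
  have hmem : (⟨z, hz⟩ : a) ∈ (⁅(⊤ : LieIdeal ℂ a), (⊤ : LieIdeal ℂ a)⁆).toSubmodule := by
    rw [lie_top_top_of_isSemisimple]; trivial
  rw [LieSubmodule.lieIdeal_oper_eq_linear_span'] at hmem
  have hle : Submodule.span ℂ {⁅x, n⁆ | (x ∈ (⊤ : LieIdeal ℂ a)) (n ∈ (⊤ : LieIdeal ℂ a))} ≤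
      b.toSubmodule.comap a.toSubmodule.subtype := by
    rw [Submodule.span_le]
    rintro _ ⟨x, -, n, -, rfl⟩
    exact hbr x x.2 n n.2
  exact hle hmem

/-- A Lie automorphism preserving `H` permutes the root spaces. -/
lemma exists_rootSpaceOf_eq_map (H : LieSubalgebra ℂ L) (ψ : L ≃ₗ[ℂ] L)
    (hψ : ∀ x y, ψ ⁅x, y⁆ = ⁅ψ x, ψ y⁆) (h₁ : ∀ x ∈ H, ψ x ∈ H) (h₂ : ∀ x ∈ H, ψ.symm x ∈ H)
    {α : Module.Dual ℂ H} (hα : IsRootOf H α) :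
    ∃ β, IsRootOf H β ∧ rootSpaceOf H β = (rootSpaceOf H α).map (ψ : L →ₗ[ℂ] L) := by
  let β : Module.Dual ℂ H := α ∘ₗ (ψ.symm : L →ₗ[ℂ] L).restrict h₂
  have hβ : ∀ h : H, β ⟨ψ h, h₁ h h.2⟩ = α h := fun h => by
    change α ⟨ψ.symm (ψ h), _⟩ = _
    congr 1
    exact Subtype.ext (ψ.symm_apply_apply _)
  have hmap : rootSpaceOf H β = (rootSpaceOf H α).map (ψ : L →ₗ[ℂ] L) := by
    ext z
    constructor
    · intro hz
      refine ⟨ψ.symm z, fun h => ψ.injective ?_, ψ.apply_symm_apply z⟩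
      have := hz ⟨ψ h, h₁ h h.2⟩
      rw [hβ] at this
      rw [hψ, map_smul, ψ.apply_symm_apply]
      exact this
    · rintro ⟨w, hw, rfl⟩ h
      have h0 := hw ⟨ψ.symm h, h₂ h h.2⟩
      have h1 := congrArg ψ h0
      rw [hψ, map_smul, ψ.apply_symm_apply] at h1
      exact h1
  refine ⟨β, ⟨fun h => hα.1 ?_, fun h => hα.2 ?_⟩, hmap⟩
  · ext x
    rw [← hβ, h]; rfl
  · rw [hmap] at h
    exact (Submodule.map_eq_bot_iff (e := ψ)).mp h

/-! ### Conjugacy of regular subalgebras -/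

theorem regular_subalgebras_conjugate_iff_weyl_conjugate
    [FiniteDimensional ℂ L] [LieAlgebra.IsSemisimple ℂ L]
    (H : LieSubalgebra ℂ L) (hH : H.IsCartanSubalgebra)
    (a₁ a₂ : LieSubalgebra ℂ L)
    -- 𝔞₁, 𝔞₂ are 𝔥ᶜ-regular:
    (hreg₁ : ∀ x ∈ H, ∀ y ∈ a₁, ⁅x, y⁆ ∈ a₁)
    (hreg₂ : ∀ x ∈ H, ∀ y ∈ a₂, ⁅x, y⁆ ∈ a₂)
    -- 𝔞₁, 𝔞₂ are semisimple:
    (hss₁ : LieAlgebra.IsSemisimple ℂ a₁)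
    (hss₂ : LieAlgebra.IsSemisimple ℂ a₂) :
    -- conjugacy under the adjoint group Gᶜ:
    (∃ φ : L ≃ₗ[ℂ] L, φ ∈ adjointGroup L ∧
        a₁.toSubmodule.map (φ : L →ₗ[ℂ] L) = a₂.toSubmodule) ↔
    -- conjugacy of Ψ(𝔥ᶜ,𝔞₁ᶜ) and Ψ(𝔥ᶜ,𝔞₂ᶜ) under the Weyl group W(𝔤ᶜ,𝔥ᶜ) = N(𝔥ᶜ)/Z(𝔥ᶜ):
    (∃ φ : L ≃ₗ[ℂ] L, φ ∈ adjointGroup L ∧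
        (∀ x ∈ H, φ x ∈ H) ∧ (∀ x ∈ H, φ.symm x ∈ H) ∧
        (∀ α ∈ rootsIn H a₁, ∃ β ∈ rootsIn H a₂,
          ∀ z ∈ rootSpaceOf H α, φ z ∈ rootSpaceOf H β) ∧
        (∀ β ∈ rootsIn H a₂, ∃ α ∈ rootsIn H a₁,
          ∀ z ∈ rootSpaceOf H α, φ z ∈ rootSpaceOf H β)) := by
  have := hH
  constructor
  · rintro ⟨φ, hφ, hmap⟩
    have hφl := map_lie_of_mem_adjointGroup hφ
    obtain ⟨x, hxH, hxr, hxe⟩ := exists_isRegular_engel_eq H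
    -- `H` and `φ H` both normalize `a₂`.
    have hxN : x ∈ a₂.normalizer :=
      (LieSubalgebra.mem_normalizer_iff _ _).mpr fun y hy => hreg₂ x hxH y hy
    have hφxN : φ x ∈ a₂.normalizer := by
      refine (LieSubalgebra.mem_normalizer_iff _ _).mpr fun y hy => ?_
      have hy' : y ∈ a₁.toSubmodule.map (φ : L →ₗ[ℂ] L) := hmap ▸ hy
      obtain ⟨w, hw, rfl⟩ := hy'
      have : φ ⁅x, w⁆ ∈ a₂.toSubmodule := hmap ▸ ⟨_, hreg₁ x hxH w hw, rfl⟩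
      rwa [hφl] at this
    obtain ⟨g, hg, hge⟩ := exists_map_engel_eq a₂.normalizer hφxN hxN
      ((isRegular_map_iff φ hφl x).mpr hxr) hxr
    have hga : a₂.toSubmodule.map (g : L →ₗ[ℂ] L) = a₂.toSubmodule :=
      map_eq_of_mem_elemGroup hg _ fun n hn y hy =>
        (LieSubalgebra.mem_normalizer_iff _ _).mp hn y hy
    have hψ : g * φ ∈ adjointGroup L := mul_mem (elemGroup_le_adjointGroup _ hg) hφ
    have hψl := map_lie_of_mem_adjointGroup hψ
    have hψH : H.toSubmodule.map ((g * φ : L ≃ₗ[ℂ] L) : L →ₗ[ℂ] L) = H.toSubmodule := by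
      rw [← map_engel φ hφl, hxe, ← Submodule.map_comp] at hge
      exact hge
    have hψa : a₁.toSubmodule.map ((g * φ : L ≃ₗ[ℂ] L) : L →ₗ[ℂ] L) = a₂.toSubmodule := by
      rw [← hga, ← hmap, ← Submodule.map_comp]
      rfl
    generalize g * φ = ψ at hψ hψl hψH hψa
    have h₁ : ∀ y ∈ H, ψ y ∈ H := fun y hy => by
      have : ψ y ∈ H.toSubmodule := hψH ▸ ⟨y, hy, rfl⟩
      exact this
    have h₂ : ∀ y ∈ H, ψ.symm y ∈ H := fun y hy => by
      have hy' : y ∈ H.toSubmodule.map (ψ : L →ₗ[ℂ] L) := by rw [hψH]; exact hy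
      obtain ⟨w, hw, rfl⟩ := hy'
      change ψ.symm (ψ w) ∈ H
      rw [ψ.symm_apply_apply]
      exact hw
    have hψl' : ∀ y z, ψ.symm ⁅y, z⁆ = ⁅ψ.symm y, ψ.symm z⁆ := fun y z => by
      rw [LinearEquiv.symm_apply_eq, hψl, ψ.apply_symm_apply, ψ.apply_symm_apply]
    refine ⟨ψ, hψ, h₁, h₂, ?_, ?_⟩
    · rintro α ⟨hα, hαa⟩
      obtain ⟨β, hβ, hβm⟩ := exists_rootSpaceOf_eq_map H ψ hψl h₁ h₂ hα
      refine ⟨β, ⟨hβ, ?_⟩, fun z hz => ?_⟩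
      · rw [hβm, ← hψa]
        exact Submodule.map_mono hαa
      · rw [hβm]
        exact ⟨z, hz, rfl⟩
    · rintro β ⟨hβ, hβa⟩
      obtain ⟨α, hα, hαm⟩ := exists_rootSpaceOf_eq_map H ψ.symm hψl' h₂ h₁ hβ
      refine ⟨α, ⟨hα, ?_⟩, fun z hz => ?_⟩
      · rw [hαm]
        rintro _ ⟨z, hz, rfl⟩
        have hz' : z ∈ a₁.toSubmodule.map (ψ : L →ₗ[ℂ] L) := hψa ▸ hβa hz
        obtain ⟨w, hw, rfl⟩ := hz'
        change ψ.symm (ψ w) ∈ a₁.toSubmodule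
        rw [ψ.symm_apply_apply]
        exact hw
      · rw [hαm] at hz
        obtain ⟨w, hw, rfl⟩ := hz
        change ψ (ψ.symm w) ∈ _
        rw [ψ.apply_symm_apply]
        exact hw
  · rintro ⟨φ, hφ, -, -, h₁, h₂⟩
    have hφl := map_lie_of_mem_adjointGroup hφ
    refine ⟨φ, hφ, le_antisymm ?_ ?_⟩
    · rintro _ ⟨z, hz, rfl⟩
      change φ z ∈ a₂
      replace hz := le_lieSpan_rootsIn H a₁ hreg₁ hss₁ hz
      induction hz using LieSubalgebra.lieSpan_induction with
      | mem z hz =>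
        obtain ⟨α, hα, hz⟩ := hz
        obtain ⟨β, hβ, h⟩ := h₁ α hα
        exact hβ.2 (h z hz)
      | zero => rw [map_zero]; exact a₂.zero_mem
      | add u v _ _ hu hv => rw [map_add]; exact a₂.add_mem hu hv
      | smul t u _ hu => rw [map_smul]; exact a₂.smul_mem _ hu
      | lie u v _ _ hu hv => rw [hφl]; exact a₂.lie_mem hu hv
    · intro z hz
      replace hz := le_lieSpan_rootsIn H a₂ hreg₂ hss₂ hz
      suffices h : ∃ w ∈ a₁, φ w = z from h
      induction hz using LieSubalgebra.lieSpan_induction with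
      | mem z hz =>
        obtain ⟨β, hβ, hz⟩ := hz
        obtain ⟨α, hα, h⟩ := h₂ β hβ
        obtain ⟨w, hw, hw0⟩ := Submodule.exists_mem_ne_zero_of_ne_bot hα.1.2
        -- `φ` maps the line `rootSpaceOf H α` onto the line `rootSpaceOf H β`.
        obtain ⟨c, rfl⟩ := exists_smul_eq_of_isRootOf hβ.1 (h w hw) (by simpa using hw0) hz
        exact ⟨c • w, a₁.smul_mem c (hα.2 hw), map_smul φ c w⟩
      | zero => exact ⟨0, a₁.zero_mem, map_zero φ⟩
      | add u v _ _ hu hv =>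
        obtain ⟨u, hu, rfl⟩ := hu
        obtain ⟨v, hv, rfl⟩ := hv
        exact ⟨u + v, a₁.add_mem hu hv, map_add φ u v⟩
      | smul t u _ hu =>
        obtain ⟨u, hu, rfl⟩ := hu
        exact ⟨t • u, a₁.smul_mem t hu, map_smul φ t u⟩
      | lie u v _ _ hu hv =>
        obtain ⟨u, hu, rfl⟩ := hu
        obtain ⟨v, hv, rfl⟩ := hv
        exact ⟨⁅u, v⁆, a₁.lie_mem hu hv, hφl u v⟩
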